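/- Every almost-planar graph has no minor isomorphic to any of the five graphs EX1, EX2, K33h, K5h, EX8; equivalently, each of these five graphs contains an edge e such that both the deletion and the contraction of e yield a nonplanar graph, so none of them is planar or almost-planar. -/

import Mathlib

open SimpleGraph

/-- `H` is a minor of `G` (branch-set / model definition). -/
def IsMinor {W V : Type*} (H : SimpleGraph W) (G : SimpleGraph V) : Prop :=
  ∃ B : W → Set V,
    (∀ w, (B w).Nonempty) ∧
    (∀ w, (G.induce (B w)).Connected) ∧
    (Pairwise fun w₁ w₂ => Disjoint (B w₁) (B w₂)) ∧
    (∀ ⦃w₁ w₂ : W⦄, H.Adj w₁ w₂ → ∃ v₁ ∈ B w₁, ∃ v₂ ∈ B w₂, G.Adj v₁ v₂)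

def K5 : SimpleGraph (Fin 5) := ⊤

def K33 : SimpleGraph (Fin 3 ⊕ Fin 3) := completeBipartiteGraph (Fin 3) (Fin 3)

/-- A graph is planar iff it has neither a `K₅` nor a `K₃,₃` minor (Wagner's theorem). -/
def Planar {V : Type*} (G : SimpleGraph V) : Prop := ¬ IsMinor K5 G ∧ ¬ IsMinor K33 G

/-- `G / uw`: contract the edge `uw`, merging `w` into `u` (the vertex `w` becomes isolated). -/
def contractEdge {V : Type*} (G : SimpleGraph V) (u w : V) : SimpleGraph V :=
  SimpleGraph.fromRel fun a b =>
    a ≠ w ∧ b ≠ w ∧ (G.Adj a b ∨ (a = u ∧ G.Adj w b) ∨ (b = u ∧ G.Adj a w))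

/-- A nonplanar graph is almost-planar if for every edge, deletion or contraction is planar. -/
def AlmostPlanar {V : Type*} (G : SimpleGraph V) : Prop :=
  ¬ Planar G ∧ ∀ ⦃u v : V⦄, G.Adj u v →
    (Planar (G.deleteEdges {s(u, v)}) ∨ Planar (contractEdge G u v))

/-- `G` is `k`-connected: more than `k` vertices and deleting fewer than `k` vertices
leaves a connected graph. -/
def KConnected {V : Type*} (G : SimpleGraph V) (k : ℕ) : Prop :=
  k < Nat.card V ∧ ∀ s : Set V, s.ncard < k → (G.induce (sᶜ)).Connected

/-- `{G[A], G[B]}` is a `k`-separation of `G`. -/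
def IsSep {V : Type*} (G : SimpleGraph V) (k : ℕ) (A B : Set V) : Prop :=
  A ∪ B = Set.univ ∧ A ≠ Set.univ ∧ B ≠ Set.univ ∧ (A ∩ B).ncard = k ∧
  ∀ ⦃x y : V⦄, G.Adj x y → (x ∈ A ∧ y ∈ A) ∨ (x ∈ B ∧ y ∈ B)

/-- The star `K_{1,3}`, with centre `0`. -/
def K13 : SimpleGraph (Fin 4) := SimpleGraph.fromRel fun a _ => a = 0

def InternallyFourConnected {V : Type*} (G : SimpleGraph V) : Prop :=
  KConnected G 3 ∧ 5 ≤ Nat.card V ∧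
  ∀ A B : Set V, IsSep G 3 A B →
    Xor' (Nonempty (G.induce A ≃g K13)) (Nonempty (G.induce B ≃g K13))

/-- The wheel `W_n`: a cycle of length `n` plus a hub (`none`) joined to all of it. -/
def wheelGraph (n : ℕ) : SimpleGraph (Option (Fin n)) :=
  SimpleGraph.fromRel fun a b =>
    match a, b with
    | some i, some j => j.val = (i.val + 1) % n
    | none, some _ => True
    | _, _ => False

def IsWheel {V : Type*} (G : SimpleGraph V) : Prop :=
  ∃ n, 3 ≤ n ∧ Nonempty (G ≃g wheelGraph n)

/-- The double wheel `DW_n`: a cycle of length `n` plus two adjacent hubs joined to all of it. -/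
def doubleWheel (n : ℕ) : SimpleGraph (Fin n ⊕ Fin 2) :=
  SimpleGraph.fromRel fun a b =>
    match a, b with
    | .inl i, .inl j => j.val = (i.val + 1) % n
    | .inl _, .inr _ => True
    | .inr _, .inr _ => True
    | _, _ => False

/-- The Möbius ladder `M_n`: a cycle of length `2n` plus all "opposite" chords. -/
def mobiusLadder (n : ℕ) : SimpleGraph (Fin (2 * n)) :=
  SimpleGraph.fromRel fun i j =>
    j.val = (i.val + 1) % (2 * n) ∨ j.val = (i.val + n) % (2 * n)

/-- `C²_m`: a cycle of length `m` plus all chords between vertices at distance two. -/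
def squareCycle (m : ℕ) : SimpleGraph (Fin m) :=
  SimpleGraph.fromRel fun i j =>
    j.val = (i.val + 1) % m ∨ j.val = (i.val + 2) % m

/-- The alternating double wheel `AW_{2n}`: a cycle of length `2n` plus two adjacent hubs,
each joined to alternating cycle vertices. -/
def altDoubleWheel (n : ℕ) : SimpleGraph (Fin (2 * n) ⊕ Fin 2) :=
  SimpleGraph.fromRel fun a b =>
    match a, b with
    | .inl i, .inl j => j.val = (i.val + 1) % (2 * n)
    | .inl i, .inr k => i.val % 2 = k.val
    | .inr _, .inr _ => True
    | _, _ => False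

/-- The class `𝒲`: three wheels glued along a common triangle `V₀`, with no other edges. -/
def InClassW {V : Type*} (G : SimpleGraph V) : Prop :=
  ∃ P : V → Fin 4,
    (P ⁻¹' {0}).ncard = 3 ∧
    (∀ x y : V, P x = 0 → P y = 0 → x ≠ y → G.Adj x y) ∧
    (∀ i : Fin 4, i ≠ 0 → IsWheel (G.induce {v | P v = 0 ∨ P v = i})) ∧
    (∀ ⦃x y : V⦄, G.Adj x y → ∃ i : Fin 4, i ≠ 0 ∧ (P x = 0 ∨ P x = i) ∧ (P y = 0 ∨ P y = i))

/-- `EX₁`: `K₃,₃` plus a vertex joined to all of one colour class. -/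
def EX1 : SimpleGraph (Option (Fin 3 ⊕ Fin 3)) :=
  SimpleGraph.fromRel fun a b =>
    match a, b with
    | some (.inl _), some (.inr _) => True
    | none, some (.inl _) => True
    | _, _ => False

/-- `EX₂`: `K₅` plus a vertex joined to three of its vertices. -/
def EX2 : SimpleGraph (Option (Fin 5)) :=
  SimpleGraph.fromRel fun a b =>
    match a, b with
    | some i, some j => i ≠ j
    | none, some j => j.val < 3
    | _, _ => False

/-- `EX₈`: `K₃,₃` plus a vertex joined to two vertices of one class and one of the other. -/
def EX8 : SimpleGraph (Option (Fin 3 ⊕ Fin 3)) :=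
  SimpleGraph.fromRel fun a b =>
    match a, b with
    | some (.inl _), some (.inr _) => True
    | none, some x => x = Sum.inl 0 ∨ x = Sum.inl 1 ∨ x = Sum.inr 0
    | _, _ => False

/-- `K₅ʰ`: subdivide the edges `01` and `02` of `K₅` and join the two subdivision vertices. -/
def K5h : SimpleGraph (Fin 5 ⊕ Fin 2) :=
  SimpleGraph.fromRel fun a b =>
    match a, b with
    | .inl i, .inl j =>
        i ≠ j ∧ ¬(i = 0 ∧ j = 1) ∧ ¬(i = 1 ∧ j = 0) ∧ ¬(i = 0 ∧ j = 2) ∧ ¬(i = 2 ∧ j = 0)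
    | .inl i, .inr k => (k = 0 ∧ (i = 0 ∨ i = 1)) ∨ (k = 1 ∧ (i = 0 ∨ i = 2))
    | .inr _, .inr _ => True
    | _, _ => False

/-- `K₃,₃ʰ`: subdivide two edges of `K₃,₃` at a common endpoint and join
the two subdivision vertices. -/
def K33h : SimpleGraph ((Fin 3 ⊕ Fin 3) ⊕ Fin 2) :=
  SimpleGraph.fromRel fun a b =>
    match a, b with
    | .inl (.inl i), .inl (.inr j) => ¬(i = 0 ∧ (j = 0 ∨ j = 1))
    | .inl (.inr j), .inl (.inl i) => ¬(i = 0 ∧ (j = 0 ∨ j = 1))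
    | .inl x, .inr k =>
        (k = 0 ∧ (x = Sum.inl 0 ∨ x = Sum.inr 0)) ∨ (k = 1 ∧ (x = Sum.inl 0 ∨ x = Sum.inr 1))
    | .inr _, .inr _ => True
    | _, _ => False

/-- `K₅⁺`: `K₅` plus a pendant vertex. -/
def K5plus : SimpleGraph (Option (Fin 5)) :=
  SimpleGraph.fromRel fun a b =>
    match a, b with
    | some i, some j => i ≠ j
    | none, some j => j = 0
    | _, _ => False

/-- `K₃,₃⁺`: `K₃,₃` plus a pendant vertex. -/
def K33plus : SimpleGraph (Option (Fin 3 ⊕ Fin 3)) :=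
  SimpleGraph.fromRel fun a b =>
    match a, b with
    | some (.inl _), some (.inr _) => True
    | none, some x => x = Sum.inl 0
    | _, _ => False

/-- `K₅ ⊕ e`: disjoint union of `K₅` and one edge. -/
def K5oplus : SimpleGraph (Fin 5 ⊕ Fin 2) :=
  SimpleGraph.fromRel fun a b =>
    match a, b with
    | .inl i, .inl j => i ≠ j
    | .inr _, .inr _ => True
    | _, _ => False

/-- `K₃,₃ ⊕ e`: disjoint union of `K₃,₃` and one edge. -/
def K33oplus : SimpleGraph ((Fin 3 ⊕ Fin 3) ⊕ Fin 2) :=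
  SimpleGraph.fromRel fun a b =>
    match a, b with
    | .inl (.inl _), .inl (.inr _) => True
    | .inr _, .inr _ => True
    | _, _ => False

/-- The triad addition of `H` at `x y z`: add a new vertex joined to `x`, `y`, `z`. -/
def triadAddition {U : Type*} (H : SimpleGraph U) (x y z : U) : SimpleGraph (Option U) :=
  SimpleGraph.fromRel fun a b =>
    match a, b with
    | some u, some v => H.Adj u v
    | none, some u => u = x ∨ u = y ∨ u = z
    | _, _ => False

def IsTriadAdditionOf {V U : Type*} (G : SimpleGraph V) (H : SimpleGraph U) : Prop :=
  ∃ x y z : U, x ≠ y ∧ y ≠ z ∧ x ≠ z ∧ Nonempty (G ≃g triadAddition H x y z)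

/-- `G` is obtained from `H` by subdividing (possibly repeatedly) edges of `H`,
all of which lie in `S`. -/
def IsSubdivisionWithin {V W : Type*} (G : SimpleGraph V) (H : SimpleGraph W)
    (S : Set (Sym2 W)) : Prop :=
  ∃ (f : W ↪ V) (p : ∀ ⦃u v : W⦄, H.Adj u v → G.Walk (f u) (f v)),
    (∀ ⦃u v : W⦄ (h : H.Adj u v), (p h).IsPath) ∧
    (∀ ⦃u v : W⦄ (h : H.Adj u v), p h.symm = (p h).reverse) ∧
    (∀ ⦃u v : W⦄ (h : H.Adj u v), s(u, v) ∉ S → (p h).length = 1) ∧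
    (∀ ⦃u v : W⦄ (h : H.Adj u v) (w : W), f w ∈ (p h).support → w = u ∨ w = v) ∧
    (∀ ⦃u v u' v' : W⦄ (h : H.Adj u v) (h' : H.Adj u' v'), s(u, v) ≠ s(u', v') →
      ∀ x : V, x ∈ (p h).support → x ∈ (p h').support → x ∈ Set.range f) ∧
    (∀ x : V, x ∈ Set.range f ∨ ∃ (u v : W) (h : H.Adj u v), x ∈ (p h).support) ∧
    (∀ e ∈ G.edgeSet, ∃ (u v : W) (h : H.Adj u v), e ∈ (p h).edges)

/-- `G` is a subdivision of `H`. -/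
def IsSubdivision {V W : Type*} (G : SimpleGraph V) (H : SimpleGraph W) : Prop :=
  IsSubdivisionWithin G H Set.univ

/-- `D(H)`: the set of edges of `H` whose deletion leaves a planar graph. -/
def Dset {U : Type*} (H : SimpleGraph U) : Set (Sym2 U) :=
  {e | e ∈ H.edgeSet ∧ Planar (H.deleteEdges {e})}

/-- `G[A]` together with all edges between vertices of `T` (`T ⊆ A` intended). -/
def deltaGraph {V : Type*} (G : SimpleGraph V) (A T : Set V) : SimpleGraph A :=
  SimpleGraph.fromRel fun a b => G.Adj a.1 b.1 ∨ (a.1 ∈ T ∧ b.1 ∈ T)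

/-- `G[A]^Y` for the separation `{G[A], G[B]}`: add a new vertex joined to `A ∩ B`. -/
def sepY {V : Type*} (G : SimpleGraph V) (A B : Set V) : SimpleGraph (Option A) :=
  SimpleGraph.fromRel fun x y =>
    match x, y with
    | some a, some b => G.Adj a.1 b.1
    | none, some a => a.1 ∈ A ∩ B
    | _, _ => False

/-- `G₂` is obtained from `G` by adding isolated vertices. -/
def AddIsolated {V₂ V : Type*} (G₂ : SimpleGraph V₂) (G : SimpleGraph V) : Prop :=
  ∃ f : V ↪ V₂, (∀ a b : V, G₂.Adj (f a) (f b) ↔ G.Adj a b) ∧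
    ∀ x : V₂, x ∉ Set.range f → ∀ y : V₂, ¬ G₂.Adj x y

/-- The set of non-isolated vertices of `G` (so `G* = G.induce (core G)`). -/
def core {V : Type*} (G : SimpleGraph V) : Set V := {v | ∃ w, G.Adj v w}

/-- `G` is obtained from `G'` by 3-summing wheels onto distinct triangles of `G'`. -/
def SumWheelsOnto {V U : Type*} (G : SimpleGraph V) (G' : SimpleGraph U) : Prop :=
  ∃ (g : U ↪ V) (k : ℕ) (Wp : Fin k → Set V) (T : Fin k → Set U),
    (∀ i, (T i).ncard = 3) ∧
    (∀ i, ∀ x ∈ T i, ∀ y ∈ T i, x ≠ y → G'.Adj x y) ∧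
    Function.Injective T ∧
    (∀ i, Disjoint (Wp i) (Set.range ⇑g)) ∧
    (Pairwise fun i j => Disjoint (Wp i) (Wp j)) ∧
    (Set.range ⇑g ∪ ⋃ i, Wp i) = Set.univ ∧
    (∀ i, IsWheel (deltaGraph G (Wp i ∪ ⇑g '' T i) (⇑g '' T i))) ∧
    (∀ a b : U, G.Adj (g a) (g b) → G'.Adj a b) ∧
    (∀ a b : U, G'.Adj a b → (G.Adj (g a) (g b) ∨ ∃ i, a ∈ T i ∧ b ∈ T i)) ∧
    (∀ ⦃x y : V⦄, G.Adj x y → (x ∈ Set.range ⇑g ∧ y ∈ Set.range ⇑g) ∨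
      ∃ i, x ∈ Wp i ∪ ⇑g '' T i ∧ y ∈ Wp i ∪ ⇑g '' T i) ∧
    (∀ i, ∀ x ∈ Wp i, ∀ ⦃y : V⦄, G.Adj x y → y ∈ Wp i ∪ ⇑g '' T i)

/-- `H` has an edge whose deletion and contraction are both nonplanar. -/
def HasBadEdge {V : Type*} (H : SimpleGraph V) : Prop :=
  ∃ u v : V, H.Adj u v ∧ ¬ Planar (H.deleteEdges {s(u, v)}) ∧ ¬ Planar (contractEdge H u v)

/-!
Call an edge *bad* if both its deletion and its contraction are nonplanar; an almost-planar graph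
has none. Bad edges lift along minors: if an edge `xy` of `H` is realised by an edge `ab` of `G`
between the branch sets of `x` and `y`, then the same branch sets exhibit `H \ xy` as a minor of
`G \ ab`, and merging those of `x` and `y` exhibits `H / xy` as a minor of `G / ab`. So it suffices
to find a bad edge in each of the five graphs. In a triad addition, any edge at the new vertex will
do, since the original graph survives. In `K5h` and `K33h` take the edge joining the two
subdivision vertices: deleting it leaves a subdivision of the original graph, and contracting it
produces a vertex which can be merged with the common endpoint of the two subdivided edges.
-/

section Connectivity

variable {V W : Type*} {G : SimpleGraph V} {K : SimpleGraph W}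

theorem connected_induce_singleton (v : V) : (G.induce {v}).Connected :=
  Connected.of_subsingleton

theorem connected_induce_biUnion {s : Set V} {C : V → Set W} (hs : (G.induce s).Connected)
    (hC : ∀ v ∈ s, (K.induce (C v)).Connected)
    (hadj : ∀ u ∈ s, ∀ v ∈ s, G.Adj u v → (K.induce (C u ∪ C v)).Connected) :
    (K.induce (⋃ v ∈ s, C v)).Connected := by
  have subset_union (v : s) : C v ⊆ ⋃ v ∈ s, C v := Set.subset_biUnion_of_mem v.2
  have reachable_of_walk {u v : s} (p : (G.induce s).Walk u v) :
      ∀ a (ha : a ∈ C u) b (hb : b ∈ C v), (K.induce (⋃ v ∈ s, C v)).Reachable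
        ⟨a, subset_union u ha⟩ ⟨b, subset_union v hb⟩ := by
    induction p with
    | @nil u =>
      intro a ha b hb
      exact ((hC u u.2).preconnected ⟨a, ha⟩ ⟨b, hb⟩).map
        (induceHomOfLE K (subset_union u)).toHom
    | @cons u u' v huu' _ ih =>
      intro a ha b hb
      obtain ⟨z, hz⟩ := (hC u' u'.2).nonempty
      have haz := ((hadj u u.2 u' u'.2 huu').preconnected ⟨a, .inl ha⟩ ⟨z, .inr hz⟩).map
        (induceHomOfLE K (Set.union_subset (subset_union u) (subset_union u'))).toHom
      exact haz.trans (ih z hz b hb)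
  obtain ⟨r⟩ := hs.nonempty
  obtain ⟨a, ha⟩ := (hC r r.2).nonempty
  refine (connected_iff_exists_forall_reachable _).2 ⟨⟨a, subset_union r ha⟩, ?_⟩
  rintro ⟨b, hb⟩
  obtain ⟨v, hv, hbv⟩ := Set.mem_iUnion₂.1 hb
  obtain ⟨p⟩ := hs.preconnected r ⟨v, hv⟩
  exact reachable_of_walk p a ha b hbv

theorem connected_induce_image_map {s : Set V} (φ : V → W) (hs : (G.induce s).Connected) :
    ((G.map φ).induce (φ '' s)).Connected := by
  rw [Set.image_eq_iUnion]
  refine connected_induce_biUnion hs (fun _ _ => connected_induce_singleton _) ?_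
  intro u _ v _ huv
  rw [Set.singleton_union]
  by_cases h : φ u = φ v
  · rw [h, Set.pair_eq_singleton]
    exact connected_induce_singleton _
  · exact induce_pair_connected_of_adj (map_adj_apply' huv h)

end Connectivity

/-- `B` is a minor model of `H` in `G`: a family of branch sets witnessing `IsMinor H G`. -/
structure IsMinorModel {W V : Type*} (H : SimpleGraph W) (G : SimpleGraph V) (B : W → Set V) :
    Prop where
  connected (w : W) : (G.induce (B w)).Connected
  disjoint : Pairwise fun w₁ w₂ => Disjoint (B w₁) (B w₂)
  exists_adj {w₁ w₂ : W} : H.Adj w₁ w₂ → ∃ v₁ ∈ B w₁, ∃ v₂ ∈ B w₂, G.Adj v₁ v₂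

section Minor

variable {U V W : Type*} {F : SimpleGraph U} {G : SimpleGraph V} {H : SimpleGraph W}

theorem isMinor_iff_exists_isMinorModel : IsMinor H G ↔ ∃ B, IsMinorModel H G B :=
  ⟨fun ⟨B, _, hconn, hdisj, hadj⟩ => ⟨B, hconn, hdisj, @hadj⟩,
    fun ⟨B, h⟩ => ⟨B, fun w => Set.nonempty_coe_sort.1 (h.connected w).nonempty, h.connected,
      h.disjoint, fun _ _ => h.exists_adj⟩⟩

theorem IsMinorModel.isMinor {B : W → Set V} (hB : IsMinorModel H G B) : IsMinor H G :=
  isMinor_iff_exists_isMinorModel.2 ⟨B, hB⟩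

theorem IsMinorModel.eq_of_mem {B : W → Set V} (hB : IsMinorModel H G B) {v : V} {w₁ w₂ : W}
    (h₁ : v ∈ B w₁) (h₂ : v ∈ B w₂) : w₁ = w₂ :=
  hB.disjoint.eq (Set.not_disjoint_iff.2 ⟨v, h₁, h₂⟩)

theorem IsMinorModel.connected_biUnion {B : W → Set V} (hB : IsMinorModel H G B) {s : Set W}
    (hs : (H.induce s).Connected) : (G.induce (⋃ w ∈ s, B w)).Connected := by
  refine connected_induce_biUnion hs (fun w _ => hB.connected w) fun u _ v _ huv => ?_
  obtain ⟨p, hp, q, hq, hpq⟩ := hB.exists_adj huv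
  exact connected_induce_union (hB.connected u).preconnected (hB.connected v).preconnected hp hq hpq

theorem IsMinor.trans (hFH : IsMinor F H) (hHG : IsMinor H G) : IsMinor F G := by
  obtain ⟨A, hA⟩ := isMinor_iff_exists_isMinorModel.1 hFH
  obtain ⟨B, hB⟩ := isMinor_iff_exists_isMinorModel.1 hHG
  refine IsMinorModel.isMinor (B := fun u => ⋃ w ∈ A u, B w)
    ⟨fun u => hB.connected_biUnion (hA.connected u), ?_, ?_⟩
  · intro u₁ u₂ hu
    refine Set.disjoint_left.2 fun v hv₁ hv₂ => hu ?_
    obtain ⟨w₁, hw₁, hvw₁⟩ := Set.mem_iUnion₂.1 hv₁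
    obtain ⟨w₂, hw₂, hvw₂⟩ := Set.mem_iUnion₂.1 hv₂
    obtain rfl := hB.eq_of_mem hvw₁ hvw₂
    exact hA.eq_of_mem hw₁ hw₂
  · intro u₁ u₂ hu
    obtain ⟨w₁, hw₁, w₂, hw₂, hw⟩ := hA.exists_adj hu
    obtain ⟨v₁, hv₁, v₂, hv₂, hv⟩ := hB.exists_adj hw
    exact ⟨v₁, Set.mem_biUnion hw₁ hv₁, v₂, Set.mem_biUnion hw₂ hv₂, hv⟩

theorem isMinor_of_copy (f : Copy H G) : IsMinor H G :=
  IsMinorModel.isMinor (B := fun w => {f w})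
    ⟨fun _ => connected_induce_singleton _,
      fun _ _ h => Set.disjoint_singleton.2 (f.injective.ne h),
      fun h => ⟨_, rfl, _, rfl, f.toHom.map_adj h⟩⟩

theorem isMinor_of_le {G' : SimpleGraph V} (h : G ≤ G') : IsMinor G G' :=
  isMinor_of_copy (Copy.ofLE G G' h)

theorem isMinor_of_connected_hub (c : U ↪ V) (h : U) {T : Set V} (hT : (G.induce T).Connected)
    (hcT : ∀ u ≠ h, c u ∉ T)
    (hadj : ∀ a b, a ≠ h → b ≠ h → F.Adj a b → G.Adj (c a) (c b))
    (hhub : ∀ b, F.Adj h b → ∃ t ∈ T, G.Adj t (c b)) : IsMinor F G := by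
  classical
  let B : U → Set V := Function.update (fun u => {c u}) h T
  have B_hub : B h = T := Function.update_self ..
  have B_of_ne {u : U} (hu : u ≠ h) : B u = {c u} := Function.update_of_ne hu ..
  refine IsMinorModel.isMinor (B := B) ⟨fun u => ?_, fun u₁ u₂ hu => ?_, fun {u₁ u₂} hu => ?_⟩
  · rcases eq_or_ne u h with rfl | huh
    · rwa [B_hub]
    · rw [B_of_ne huh]
      exact connected_induce_singleton _
  · rcases eq_or_ne u₁ h with rfl | h₁
    · rw [B_hub, B_of_ne hu.symm]
      exact Set.disjoint_singleton_right.2 (hcT _ hu.symm)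
    rcases eq_or_ne u₂ h with rfl | h₂
    · rw [B_hub, B_of_ne hu]
      exact Set.disjoint_singleton_left.2 (hcT _ hu)
    rw [B_of_ne h₁, B_of_ne h₂]
    exact Set.disjoint_singleton.2 (c.injective.ne hu)
  · rcases eq_or_ne u₁ h with rfl | h₁
    · obtain ⟨t, ht, htu⟩ := hhub u₂ hu
      exact ⟨t, by rwa [B_hub], c u₂, by simp [B_of_ne hu.ne'], htu⟩
    rcases eq_or_ne u₂ h with rfl | h₂
    · obtain ⟨t, ht, htu⟩ := hhub u₁ hu.symm
      exact ⟨c u₁, by simp [B_of_ne h₁], t, by rwa [B_hub], htu.symm⟩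
    exact ⟨c u₁, by simp [B_of_ne h₁], c u₂, by simp [B_of_ne h₂], hadj u₁ u₂ h₁ h₂ hu⟩

end Minor

/-- The vertex map of the contraction `G → G / uw`, which sends `w` to `u`. -/
def contractVertex {V : Type*} [DecidableEq V] (u w : V) : V → V := Function.update id w u

section Contraction

variable {V : Type*} [DecidableEq V] {G : SimpleGraph V} {u w : V}

theorem contractVertex_self : contractVertex u w w = u := Function.update_self ..

theorem contractVertex_of_ne {v : V} (hv : v ≠ w) : contractVertex u w v = v :=
  Function.update_of_ne hv ..

theorem contractVertex_ne (huw : u ≠ w) (v : V) : contractVertex u w v ≠ w := by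
  rcases eq_or_ne v w with rfl | hv
  · rwa [contractVertex_self]
  · rwa [contractVertex_of_ne hv]

theorem contractVertex_eq_iff {p q : V} :
    contractVertex u w p = contractVertex u w q ↔ p = q ∨ s(p, q) = s(u, w) := by
  have hself := contractVertex_self (u := u) (w := w)
  have hne {v : V} (hv : v ≠ w) := contractVertex_of_ne (u := u) hv
  rw [Sym2.eq_iff]
  by_cases hp : p = w <;> by_cases hq : q = w
  · simp [hp, hq]
  · rw [hp, hself, hne hq]
    grind
  · rw [hq, hself, hne hp]
    grind
  · rw [hne hp, hne hq]
    grind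

theorem contractEdge_eq_map (huw : u ≠ w) :
    contractEdge G u w = G.map (contractVertex u w) := by
  have hself := contractVertex_self (u := u) (w := w)
  ext p q
  rw [contractEdge, fromRel_adj, map_adj']
  refine and_congr_right fun hpq => ⟨?_, ?_⟩
  · grind [contractVertex_of_ne, G.adj_comm]
  · rintro ⟨a, b, hab, rfl, rfl⟩
    refine .inl ⟨contractVertex_ne huw a, contractVertex_ne huw b, ?_⟩
    rcases eq_or_ne a w with rfl | ha
    · rw [hself, contractVertex_of_ne hab.ne']
      exact .inr (.inl ⟨rfl, hab⟩)
    rcases eq_or_ne b w with rfl | hb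
    · rw [hself, contractVertex_of_ne ha]
      exact .inr (.inr ⟨rfl, hab⟩)
    rw [contractVertex_of_ne ha, contractVertex_of_ne hb]
    exact .inl hab

theorem connected_induce_preimage_contractVertex (huw : G.Adj u w) {v : V} (hv : v ≠ w) :
    (G.induce (contractVertex u w ⁻¹' {v})).Connected := by
  rcases eq_or_ne v u with rfl | hvu
  · have : contractVertex v w ⁻¹' {v} = {v, w} := by
      ext p
      grind [contractVertex_self, contractVertex_of_ne]
    rw [this]
    exact induce_pair_connected_of_adj huw
  · have : contractVertex u w ⁻¹' {v} = {v} := by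
      ext p
      grind [contractVertex_self, contractVertex_of_ne]
    rw [this]
    exact connected_induce_singleton v

end Contraction

namespace IsMinorModel

variable {V W : Type*} {G : SimpleGraph V} {H : SimpleGraph W} {B : W → Set V} {x y : W} {a b : V}

theorem sym2_eq (hB : IsMinorModel H G B) (ha : a ∈ B x) (hb : b ∈ B y) {p q : V} {w₁ w₂ : W}
    (hp : p ∈ B w₁) (hq : q ∈ B w₂) (hpq : s(p, q) = s(a, b)) : s(w₁, w₂) = s(x, y) := by
  rcases Sym2.eq_iff.1 hpq with ⟨rfl, rfl⟩ | ⟨rfl, rfl⟩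
  · rw [hB.eq_of_mem hp ha, hB.eq_of_mem hq hb]
  · rw [hB.eq_of_mem hp hb, hB.eq_of_mem hq ha, Sym2.eq_swap]

theorem deleteEdges (hB : IsMinorModel H G B) (hxy : x ≠ y) (ha : a ∈ B x) (hb : b ∈ B y) :
    IsMinorModel (H.deleteEdges {s(x, y)}) (G.deleteEdges {s(a, b)}) B where
  connected w := by
    refine (hB.connected w).mono fun p q hpq => (deleteEdges_adj ..).2 ⟨hpq, fun hab => hxy ?_⟩
    have hww : s(w, w) = s(x, y) := hB.sym2_eq ha hb p.2 q.2 hab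
    grind [Sym2.eq_iff]
  disjoint := hB.disjoint
  exists_adj h := by
    obtain ⟨hw, hne⟩ := (deleteEdges_adj ..).1 h
    obtain ⟨p, hp, q, hq, hpq⟩ := hB.exists_adj hw
    exact ⟨p, hp, q, hq,
      (deleteEdges_adj ..).2 ⟨hpq, fun hab => hne (hB.sym2_eq ha hb hp hq hab)⟩⟩

variable [DecidableEq V] [DecidableEq W]

theorem contractVertex_congr (hB : IsMinorModel H G B) (ha : a ∈ B x) (hb : b ∈ B y)
    {p q : V} {w₁ w₂ : W} (hp : p ∈ B w₁) (hq : q ∈ B w₂)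
    (hpq : contractVertex a b p = contractVertex a b q) :
    contractVertex x y w₁ = contractVertex x y w₂ := by
  rw [contractVertex_eq_iff]
  rcases contractVertex_eq_iff.1 hpq with rfl | h
  · exact .inl (hB.eq_of_mem hp hq)
  · exact .inr (hB.sym2_eq ha hb hp hq h)

/-- The branch sets of `H / xy` in `G / ab`: the images of the unions of the branch sets identified
by the contraction. The vertex `y`, isolated in `H / xy`, is assigned the isolated vertex `b`. -/
def contractBranch (B : W → Set V) (x y : W) (a b : V) : W → Set V :=
  Function.update (fun w => contractVertex a b '' ⋃ v ∈ contractVertex x y ⁻¹' {w}, B v) y {b}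

theorem contractBranch_self : contractBranch B x y a b y = {b} :=
  Function.update_self ..

theorem mem_contractBranch {w : W} (hw : w ≠ y) {p : V} :
    p ∈ contractBranch B x y a b w ↔
      ∃ v, contractVertex x y v = w ∧ ∃ q ∈ B v, contractVertex a b q = p := by
  rw [contractBranch, Function.update_of_ne hw]
  simp only [Set.mem_image, Set.mem_iUnion, Set.mem_preimage, Set.mem_singleton_iff, exists_prop]
  grind

theorem disjoint_contractBranch (hB : IsMinorModel H G B) (hab : a ≠ b)
    (ha : a ∈ B x) (hb : b ∈ B y) :
    Pairwise fun w₁ w₂ =>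
      Disjoint (contractBranch B x y a b w₁) (contractBranch B x y a b w₂) := by
  have b_notMem {w : W} (hw : w ≠ y) : b ∉ contractBranch B x y a b w := by
    rw [mem_contractBranch hw]
    rintro ⟨_, _, q, _, hq⟩
    exact contractVertex_ne hab q hq
  intro w₁ w₂ hw
  rcases eq_or_ne w₁ y with rfl | h₁
  · rw [contractBranch_self]
    exact Set.disjoint_singleton_left.2 (b_notMem hw.symm)
  rcases eq_or_ne w₂ y with rfl | h₂
  · rw [contractBranch_self]
    exact Set.disjoint_singleton_right.2 (b_notMem hw)
  refine Set.disjoint_left.2 fun v hv₁ hv₂ => hw ?_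
  obtain ⟨_, rfl, p, hp, hpv⟩ := (mem_contractBranch h₁).1 hv₁
  obtain ⟨_, rfl, q, hq, hqv⟩ := (mem_contractBranch h₂).1 hv₂
  exact hB.contractVertex_congr ha hb hp hq (hpv.trans hqv.symm)

theorem contractEdge (hB : IsMinorModel H G B) (hxy : H.Adj x y) (hab : G.Adj a b)
    (ha : a ∈ B x) (hb : b ∈ B y) :
    IsMinorModel (contractEdge H x y) (contractEdge G a b) (contractBranch B x y a b) := by
  rw [contractEdge_eq_map hxy.ne, contractEdge_eq_map hab.ne]
  refine ⟨fun w => ?_, ?_, ?_⟩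
  · rcases eq_or_ne w y with rfl | hw
    · rw [contractBranch_self]
      exact connected_induce_singleton _
    · rw [contractBranch, Function.update_of_ne hw]
      exact connected_induce_image_map _
        (hB.connected_biUnion (connected_induce_preimage_contractVertex hxy hw))
  · exact hB.disjoint_contractBranch hab.ne ha hb
  · rintro _ _ ⟨hne, v₁, v₂, hv, rfl, rfl⟩
    obtain ⟨p, hp, q, hq, hpq⟩ := hB.exists_adj hv
    exact ⟨_, (mem_contractBranch (contractVertex_ne hxy.ne _)).2 ⟨v₁, rfl, p, hp, rfl⟩,
      _, (mem_contractBranch (contractVertex_ne hxy.ne _)).2 ⟨v₂, rfl, q, hq, rfl⟩,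
      map_adj_apply' hpq fun h => hne (hB.contractVertex_congr ha hb hp hq h)⟩

end IsMinorModel

section BadEdge

variable {U V W : Type*} {F : SimpleGraph U} {G : SimpleGraph V} {H : SimpleGraph W}

theorem Planar.of_isMinor (hG : Planar G) (h : IsMinor H G) : Planar H :=
  ⟨fun h5 => hG.1 (h5.trans h), fun h33 => hG.2 (h33.trans h)⟩

theorem not_planar_K5 : ¬ Planar K5 := fun h => h.1 (isMinor_of_le le_rfl)

theorem not_planar_K33 : ¬ Planar K33 := fun h => h.2 (isMinor_of_le le_rfl)

theorem HasBadEdge.of_isMinor (hH : HasBadEdge H) (h : IsMinor H G) : HasBadEdge G := by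
  classical
  obtain ⟨x, y, hxy, hdel, hcon⟩ := hH
  obtain ⟨B, hB⟩ := isMinor_iff_exists_isMinorModel.1 h
  obtain ⟨a, ha, b, hb, hab⟩ := hB.exists_adj hxy
  exact ⟨a, b, hab, fun hG => hdel (hG.of_isMinor (hB.deleteEdges hxy.ne ha hb).isMinor),
    fun hG => hcon (hG.of_isMinor (hB.contractEdge hxy hab ha hb).isMinor)⟩

theorem HasBadEdge.not_planar (hG : HasBadEdge G) : ¬ Planar G := by
  obtain ⟨_, _, _, hdel, _⟩ := hG
  exact fun h => hdel (h.of_isMinor (isMinor_of_le (deleteEdges_le _)))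

theorem HasBadEdge.not_almostPlanar (hG : HasBadEdge G) : ¬ AlmostPlanar G := by
  obtain ⟨_, _, huv, hdel, hcon⟩ := hG
  exact fun h => (h.2 huv).elim hdel hcon

theorem HasBadEdge.not_planar_or_almostPlanar (hG : HasBadEdge G) :
    ¬ (Planar G ∨ AlmostPlanar G) :=
  not_or.2 ⟨hG.not_planar, hG.not_almostPlanar⟩

theorem AlmostPlanar.not_isMinor (hG : AlmostPlanar G) (hH : HasBadEdge H) : ¬ IsMinor H G :=
  fun h => (hH.of_isMinor h).not_almostPlanar hG

theorem hasBadEdge_of_copy (hF : ¬ Planar F) (f : Copy F G) {u w : V} (huw : G.Adj u w)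
    (hw : ∀ a, f a ≠ w) : HasBadEdge G := by
  have adj_map {a b : U} (hab : F.Adj a b) : G.Adj (f a) (f b) := f.toHom.map_adj hab
  have minor_delete : IsMinor F (G.deleteEdges {s(u, w)}) := by
    refine isMinor_of_copy ⟨⟨f, fun hab => (deleteEdges_adj ..).2 ⟨adj_map hab, ?_⟩⟩, f.injective⟩
    grind [Sym2.eq_iff]
  have minor_contract : IsMinor F (contractEdge G u w) :=
    isMinor_of_copy ⟨⟨f, fun {a b} hab => (fromRel_adj ..).2
      ⟨(adj_map hab).ne, .inl ⟨hw a, hw b, .inl (adj_map hab)⟩⟩⟩, f.injective⟩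
  exact ⟨u, w, huw, fun h => hF (h.of_isMinor minor_delete),
    fun h => hF (h.of_isMinor minor_contract)⟩

end BadEdge

/-- The graph `Fʰ` obtained from `F` by subdividing the edges `hp` and `hq` and joining the two
subdivision vertices `inr 0` and `inr 1`. -/
def cornerSubdivision {U : Type*} (F : SimpleGraph U) (h p q : U) : SimpleGraph (U ⊕ Fin 2) :=
  SimpleGraph.fromRel fun a b =>
    match a, b with
    | .inl a, .inl b => F.Adj a b ∧ s(a, b) ≠ s(h, p) ∧ s(a, b) ≠ s(h, q)
    | .inl a, .inr k => a = h ∨ (k = 0 ∧ a = p) ∨ (k = 1 ∧ a = q)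
    | .inr _, .inr _ => True
    | _, _ => False

section CornerSubdivision

variable {U : Type*} {F : SimpleGraph U} {h p q : U}

theorem cornerSubdivision_adj_inl_inl {a b : U} (hab : F.Adj a b) (hp : s(a, b) ≠ s(h, p))
    (hq : s(a, b) ≠ s(h, q)) : (cornerSubdivision F h p q).Adj (.inl a) (.inl b) :=
  (fromRel_adj ..).2 ⟨Sum.inl_injective.ne hab.ne, .inl ⟨hab, hp, hq⟩⟩

theorem cornerSubdivision_adj_hub (k : Fin 2) :
    (cornerSubdivision F h p q).Adj (.inl h) (.inr k) :=
  (fromRel_adj ..).2 ⟨Sum.inl_ne_inr, .inl (.inl rfl)⟩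

theorem cornerSubdivision_adj_left : (cornerSubdivision F h p q).Adj (.inl p) (.inr 0) :=
  (fromRel_adj ..).2 ⟨Sum.inl_ne_inr, .inl (.inr (.inl ⟨rfl, rfl⟩))⟩

theorem cornerSubdivision_adj_right : (cornerSubdivision F h p q).Adj (.inl q) (.inr 1) :=
  (fromRel_adj ..).2 ⟨Sum.inl_ne_inr, .inl (.inr (.inr ⟨rfl, rfl⟩))⟩

theorem cornerSubdivision_adj_inr_inr : (cornerSubdivision F h p q).Adj (.inr 0) (.inr 1) :=
  (fromRel_adj ..).2 ⟨Sum.inr_injective.ne (by decide), .inl trivial⟩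

theorem isMinor_of_connected_corner {G : SimpleGraph (U ⊕ Fin 2)} {T : Set (U ⊕ Fin 2)}
    (hT : (G.induce T).Connected) (hhT : .inl h ∈ T) (hUT : ∀ u ≠ h, .inl u ∉ T)
    (hadj : ∀ a b, F.Adj a b → s(a, b) ≠ s(h, p) → s(a, b) ≠ s(h, q) → G.Adj (.inl a) (.inl b))
    (hp : ∃ t ∈ T, G.Adj t (.inl p)) (hq : ∃ t ∈ T, G.Adj t (.inl q)) : IsMinor F G := by
  refine isMinor_of_connected_hub Function.Embedding.inl h hT hUT
    (fun a b ha hb hab => hadj a b hab ?_ ?_) fun b hb => ?_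
  · grind [Sym2.eq_iff]
  · grind [Sym2.eq_iff]
  · rcases eq_or_ne b p with rfl | hbp
    · exact hp
    rcases eq_or_ne b q with rfl | hbq
    · exact hq
    exact ⟨.inl h, hhT, hadj h b hb (Sym2.congr_right.not.2 hbp) (Sym2.congr_right.not.2 hbq)⟩

theorem isMinor_deleteEdges_cornerSubdivision :
    IsMinor F ((cornerSubdivision F h p q).deleteEdges {s(.inr 0, .inr 1)}) := by
  set G := (cornerSubdivision F h p q).deleteEdges {s(.inr 0, .inr 1)}
  have adj_of_inl {a : U} {z : U ⊕ Fin 2} (haz : (cornerSubdivision F h p q).Adj (.inl a) z) :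
      G.Adj (.inl a) z :=
    (deleteEdges_adj ..).2 ⟨haz, by simp⟩
  have adj_spoke (k : Fin 2) : G.Adj (.inl h) (.inr k) :=
    adj_of_inl (cornerSubdivision_adj_hub k)
  have connected_spokes : (G.induce ({.inl h, .inr 0} ∪ {.inl h, .inr 1})).Connected :=
    induce_union_connected (induce_pair_connected_of_adj (adj_spoke 0)).preconnected
      (induce_pair_connected_of_adj (adj_spoke 1)).preconnected ⟨.inl h, by simp⟩
  refine isMinor_of_connected_corner connected_spokes (by simp) (by simp)
    (fun a b hab hp hq => adj_of_inl (cornerSubdivision_adj_inl_inl hab hp hq))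
    ⟨.inr 0, by simp, (adj_of_inl cornerSubdivision_adj_left).symm⟩
    ⟨.inr 1, by simp, (adj_of_inl cornerSubdivision_adj_right).symm⟩

theorem isMinor_contractEdge_cornerSubdivision :
    IsMinor F (contractEdge (cornerSubdivision F h p q) (.inr 0) (.inr 1)) := by
  set C := cornerSubdivision F h p q
  set G := contractEdge C (.inr 0) (.inr 1)
  have adj_inl {a b : U} (hab : C.Adj (.inl a) (.inl b)) : G.Adj (.inl a) (.inl b) :=
    (fromRel_adj ..).2 ⟨hab.ne, .inl ⟨by simp, by simp, .inl hab⟩⟩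
  have adj_merged {a : U} {k : Fin 2} (ha : C.Adj (.inl a) (.inr k)) :
      G.Adj (.inl a) (.inr 0) := by
    refine (fromRel_adj ..).2 ⟨by simp, .inl ⟨by simp, by simp, ?_⟩⟩
    fin_cases k
    · exact .inl ha
    · exact .inr (.inr ⟨rfl, ha⟩)
  have connected_spoke : (G.induce {.inl h, .inr 0}).Connected :=
    induce_pair_connected_of_adj (adj_merged (cornerSubdivision_adj_hub 0))
  refine isMinor_of_connected_corner connected_spoke (by simp) (by simp)
    (fun a b hab hp hq => adj_inl (cornerSubdivision_adj_inl_inl hab hp hq))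
    ⟨.inr 0, by simp, (adj_merged cornerSubdivision_adj_left).symm⟩
    ⟨.inr 0, by simp, (adj_merged cornerSubdivision_adj_right).symm⟩

theorem hasBadEdge_cornerSubdivision (hF : ¬ Planar F) (h p q : U) :
    HasBadEdge (cornerSubdivision F h p q) :=
  ⟨.inr 0, .inr 1, cornerSubdivision_adj_inr_inr,
    fun hdel => hF (hdel.of_isMinor isMinor_deleteEdges_cornerSubdivision),
    fun hcon => hF (hcon.of_isMinor isMinor_contractEdge_cornerSubdivision)⟩

end CornerSubdivision

theorem hasBadEdge_triadAddition {U : Type*} {F : SimpleGraph U} (hF : ¬ Planar F) (x y z : U) :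
    HasBadEdge (triadAddition F x y z) := by
  let f : Copy F (triadAddition F x y z) :=
    ⟨⟨some, fun {a b} hab => (fromRel_adj ..).2
      ⟨(Option.some_injective U).ne hab.ne, .inl hab⟩⟩, Option.some_injective U⟩
  exact hasBadEdge_of_copy hF f (u := some x) (w := none)
    ((fromRel_adj ..).2 ⟨Option.some_ne_none x, .inr (.inl rfl)⟩) Option.some_ne_none

theorem triadAddition_K33_le_EX1 : triadAddition K33 (.inl 0) (.inl 1) (.inl 2) ≤ EX1 := by
  rintro (_ | i | i) (_ | j | j) <;> simp [triadAddition, K33, EX1]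

theorem triadAddition_K5_le_EX2 : triadAddition K5 0 1 2 ≤ EX2 := by
  rintro (_ | i) (_ | j) <;> grind [triadAddition, K5, EX2, fromRel_adj, top_adj]

theorem triadAddition_K33_le_EX8 : triadAddition K33 (.inl 0) (.inl 1) (.inr 0) ≤ EX8 := by
  rintro (_ | i | i) (_ | j | j) <;> simp [triadAddition, K33, EX8]

theorem cornerSubdivision_K5_le_K5h : cornerSubdivision K5 0 1 2 ≤ K5h := by
  rintro (i | k) (j | l) <;> grind [cornerSubdivision, K5, K5h, fromRel_adj, top_adj, Sym2.eq_iff]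

theorem cornerSubdivision_K33_le_K33h :
    cornerSubdivision K33 (.inl 0) (.inr 0) (.inr 1) ≤ K33h := by
  rintro ((i | i) | k) ((j | j) | l) <;>
    grind [cornerSubdivision, K33, K33h, fromRel_adj, completeBipartiteGraph_adj, Sym2.eq_iff]

theorem hasBadEdge_EX1 : HasBadEdge EX1 :=
  (hasBadEdge_triadAddition not_planar_K33 ..).of_isMinor (isMinor_of_le triadAddition_K33_le_EX1)

theorem hasBadEdge_EX2 : HasBadEdge EX2 :=
  (hasBadEdge_triadAddition not_planar_K5 ..).of_isMinor (isMinor_of_le triadAddition_K5_le_EX2)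

theorem hasBadEdge_EX8 : HasBadEdge EX8 :=
  (hasBadEdge_triadAddition not_planar_K33 ..).of_isMinor (isMinor_of_le triadAddition_K33_le_EX8)

theorem hasBadEdge_K5h : HasBadEdge K5h :=
  (hasBadEdge_cornerSubdivision not_planar_K5 ..).of_isMinor
    (isMinor_of_le cornerSubdivision_K5_le_K5h)

theorem hasBadEdge_K33h : HasBadEdge K33h :=
  (hasBadEdge_cornerSubdivision not_planar_K33 ..).of_isMinor
    (isMinor_of_le cornerSubdivision_K33_le_K33h)

theorem stmt2_general.{u} :
    (∀ (V : Type u) (G : SimpleGraph V), AlmostPlanar G →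
      ¬ IsMinor EX1 G ∧ ¬ IsMinor EX2 G ∧ ¬ IsMinor K33h G ∧
      ¬ IsMinor K5h G ∧ ¬ IsMinor EX8 G) ∧
    (HasBadEdge EX1 ∧ HasBadEdge EX2 ∧ HasBadEdge K33h ∧ HasBadEdge K5h ∧ HasBadEdge EX8) ∧
    (¬ (Planar EX1 ∨ AlmostPlanar EX1) ∧ ¬ (Planar EX2 ∨ AlmostPlanar EX2) ∧
     ¬ (Planar K33h ∨ AlmostPlanar K33h) ∧ ¬ (Planar K5h ∨ AlmostPlanar K5h) ∧
     ¬ (Planar EX8 ∨ AlmostPlanar EX8)) := by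
  refine ⟨fun V G hG => ?_, ?_, ?_⟩
  · exact ⟨hG.not_isMinor hasBadEdge_EX1, hG.not_isMinor hasBadEdge_EX2,
      hG.not_isMinor hasBadEdge_K33h, hG.not_isMinor hasBadEdge_K5h,
      hG.not_isMinor hasBadEdge_EX8⟩
  · exact ⟨hasBadEdge_EX1, hasBadEdge_EX2, hasBadEdge_K33h, hasBadEdge_K5h, hasBadEdge_EX8⟩
  · exact ⟨hasBadEdge_EX1.not_planar_or_almostPlanar, hasBadEdge_EX2.not_planar_or_almostPlanar,
      hasBadEdge_K33h.not_planar_or_almostPlanar, hasBadEdge_K5h.not_planar_or_almostPlanar,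
      hasBadEdge_EX8.not_planar_or_almostPlanar⟩

/-- Every almost-planar graph is {EX1, EX2, K33h, K5h, EX8}-free; each of the five
graphs has an edge whose deletion and contraction are both nonplanar, so none of
them is planar or almost-planar. -/
theorem stmt2 :
    (∀ (V : Type) [Fintype V] (G : SimpleGraph V), AlmostPlanar G →
      ¬ IsMinor EX1 G ∧ ¬ IsMinor EX2 G ∧ ¬ IsMinor K33h G ∧
      ¬ IsMinor K5h G ∧ ¬ IsMinor EX8 G) ∧
    (HasBadEdge EX1 ∧ HasBadEdge EX2 ∧ HasBadEdge K33h ∧ HasBadEdge K5h ∧ HasBadEdge EX8) ∧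
    (¬ (Planar EX1 ∨ AlmostPlanar EX1) ∧ ¬ (Planar EX2 ∨ AlmostPlanar EX2) ∧
     ¬ (Planar K33h ∨ AlmostPlanar K33h) ∧ ¬ (Planar K5h ∨ AlmostPlanar K5h) ∧
     ¬ (Planar EX8 ∨ AlmostPlanar EX8)) := by
  exact ⟨fun V _ G => stmt2_general.1 V G, stmt2_general.{0}.2⟩
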